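/- arXiv:2008.01121 — 2 statements merged into one kernel-verified Lean document; each statement's English description precedes it below -/
import Mathlib

section
/- The 𝒢-invariant is the universal valuative invariant of Coxeter matroids of type (Φ,I): for every valuative invariant g : Mat_{Φ,I} → A into a ℚ-vector space A, there exists a unique ℚ-linear map ψ : ℚ^{W·δ_I} → A such that ψ ∘ 𝒢 = g. -/
/-!
Write `min^w(M)` for the minimum of `M` in the chamber of `w`, and `𝒢` for the map `G`. The theorem
amounts to two facts: every linear relation between values of `𝒢` also holds between the values of a
valuative invariant `g`, and the values of `𝒢` span `ℚ^{W·δ_I}`. The first gives the existence of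
`ψ`, the second its uniqueness.

*Relations.* Suppose `∑ c_M 𝒢(M) = 0`. Since `min^v(w M) = w · min^{w⁻¹v}(M)`, the substitution
`x = w⁻¹ v` shows that `∑_{M,w} c_M e_{min^v(w M)} = 0` for every `v ∈ W`. By
`indicator_sum_eq_zero` this forces `∑_{M,w} c_M 1_{P_{wM}} = 0`: for a fixed point `x`, the
functionals of bounded norm that separate `x` from `P` with margin `1` form a compact convex set,
empty iff `x ∈ P`, and whether a functional `y` belongs to it depends only on the minimum of `P` in
a chamber containing `y`. The Euler characteristic (`euler_char`), which sends the indicator of a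
nonempty compact convex set to `1`, then turns the relation between minima into the relation between
indicators at `x`. Valuativity and `W`-invariance of `g` give `|W| · ∑ c_M g(M) = 0`.

*Spanning.* For `u` in the orbit let `M_u` be the set of points above `u` in the Bruhat order
(`upSet`). It is a Coxeter matroid (`RootData.upSet_isMin`): if `⟨u, α_i⟩ < 0` then
`M_u = M_{s_i u} ∪ s_i M_{s_i u}` (`RootData.upSet_eq`), and such a union inherits chamber minima
from `M_{s_i u}` (`RootData.exists_isMin_union`). Moreover every point `w⁻¹ min^w(M_u)` is `u` or
has strictly smaller pairing with `z` (`RootData.upSet_isMin_lt`), and `w = 1` gives `u`. Thus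
`𝒢(M_u)` is a positive multiple of `e_u` plus terms lower with respect to `⟨z, ·⟩`, and the vectors
`𝒢(M_u)` span.
-/

open RealInnerProductSpace

noncomputable def indic {V : Type*} (P : Set V) : V → ℤ := P.indicator 1

noncomputable def iv (p : Prop) : ℤ := @ite _ p (Classical.propDecidable p) 1 0

def Valuative {V A : Type*} [AddCommGroup A] (Fam : Set (Set V)) (f : Set V → A) : Prop :=
  ∀ (k : ℕ) (a : Fin k → ℤ) (P : Fin k → Set V),
    (∀ i, P i ∈ Fam) → (∑ i, a i • indic (P i)) = 0 → (∑ i, a i • f (P i)) = 0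

variable {V : Type*} [NormedAddCommGroup V] [InnerProductSpace ℝ V] [FiniteDimensional ℝ V]

def IsPolyhedron (P : Set V) : Prop :=
  P.Nonempty ∧ ∃ s : Finset (V × ℝ), P = {x | ∀ p ∈ s, ⟪p.1, x⟫ ≤ p.2}

def IsFace (Q F : Set V) : Prop :=
  ∃ y : V, F.Nonempty ∧ F = {x | x ∈ Q ∧ ∀ q ∈ Q, ⟪y, q⟫ ≤ ⟪y, x⟫}

def IsConvexCone (C : Set V) : Prop :=
  (0 : V) ∈ C ∧ Convex ℝ C ∧ ∀ c : ℝ, 0 ≤ c → ∀ x ∈ C, c • x ∈ C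

def coneGen (S : Set V) : Set V := ⋂₀ {C : Set V | IsConvexCone C ∧ S ⊆ C}

def tanCone (Q F : Set V) : Set V := coneGen {d | ∃ q ∈ Q, ∃ v ∈ F, d = q - v}

def normCone (Q F : Set V) : Set V := {y | ∀ v ∈ F, ∀ q ∈ Q, ⟪y, q⟫ ≤ ⟪y, v⟫}

def IsExtDef (Q P : Set V) : Prop :=
  IsPolyhedron P ∧ ∀ F : Set V, IsFace P F → ∃ 𝒢 : Set (Set V),
    (∀ G ∈ 𝒢, IsFace Q G) ∧ normCone P F = ⋃ G ∈ 𝒢, normCone Q G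

def lineal (C : Set V) : Set V := C ∩ (-C)

def transl (v : V) (C : Set V) : Set V := (fun x => v + x) '' C

def TightContains (C : Set V) (v : V) (P : Set V) : Prop :=
  P ⊆ transl v C ∧ (P ∩ transl v (lineal C)).Nonempty

/-- `ivq p` is `1` if the proposition `p` holds and `0` otherwise, in `ℚ`. -/
noncomputable def ivq (p : Prop) : ℚ := @ite _ p (Classical.propDecidable p) 1 0

/-- The Weyl group of a root system `R`. -/
def WeylGrp (R : Finset V) : Subgroup (V ≃ₗᵢ[ℝ] V) :=
  Subgroup.closure {s | ∃ α ∈ R, ∀ x : V, s x = x - ((2 * ⟪x, α⟫) / ⟪α, α⟫) • α}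

set_option linter.unusedSectionVars false

/-! ### Euler characteristic of compact convex sets -/

lemma ivq_pos {p : Prop} (h : p) : ivq p = 1 := by simp [ivq, h]

lemma ivq_neg {p : Prop} (h : ¬p) : ivq p = 0 := by simp [ivq, h]

lemma ivq_congr {p q : Prop} (h : p ↔ q) : ivq p = ivq q := by rw [propext h]

/-- The one-dimensional case of the Euler characteristic. The jump of `∑ i, c i • 1_[l i, r i]`
from the left at `t` is the sum of the `c i` with `l i = t`, so each of these sums vanishes. -/
lemma euler_Icc {ι : Type*} (s : Finset ι) (c : ι → ℚ) (l r : ι → ℝ)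
    (hlr : ∀ i ∈ s, l i ≤ r i)
    (h : ∀ t, ∑ i ∈ s, c i * ivq (t ∈ Set.Icc (l i) (r i)) = 0) : ∑ i ∈ s, c i = 0 := by
  classical
  have key : ∀ t, ∑ i ∈ s with l i = t, c i = 0 := by
    intro t
    obtain ⟨t', ht', hs⟩ : ∃ t' < t, ∀ i ∈ s, (l i < t → l i < t') ∧ (r i < t → r i < t') := by
      have h1 : ∀ i ∈ s, ∀ᶠ t' in nhdsWithin t (Set.Iio t),
          (l i < t → l i < t') ∧ (r i < t → r i < t') := by
        intro i _
        have aux : ∀ a : ℝ, ∀ᶠ t' in nhdsWithin t (Set.Iio t), a < t → a < t' := by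
          intro a
          by_cases ha : a < t
          · filter_upwards [mem_nhdsWithin_of_mem_nhds (Ioi_mem_nhds ha)] with x hx _ using hx
          · exact Filter.Eventually.of_forall fun x hx => absurd hx ha
        exact (aux _).and (aux _)
      have h2 := (Filter.eventually_all_finset s).2 h1
      have h3 : ∀ᶠ t' in nhdsWithin t (Set.Iio t), t' < t := self_mem_nhdsWithin
      obtain ⟨t', h4, h5⟩ := (h3.and h2).exists
      exact ⟨t', h4, h5⟩
    have hd : ∑ i ∈ s, c i * (ivq (t ∈ Set.Icc (l i) (r i)) - ivq (t' ∈ Set.Icc (l i) (r i))) = 0 := by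
      simp only [mul_sub, Finset.sum_sub_distrib, h, sub_zero]
    rw [Finset.sum_filter]
    refine (Finset.sum_congr rfl fun i hi => ?_).trans hd
    obtain ⟨ha, hb⟩ := hs i hi
    have hle := hlr i hi
    rcases lt_trichotomy (l i) t with hl | hl | hl
    · have hl' := ha hl
      by_cases hr : r i < t
      · have hr' := hb hr
        rw [ivq_neg (fun hx => absurd hx.2 (by linarith)),
          ivq_neg (fun hx => absurd hx.2 (by linarith))]
        simp [hl.ne]
      · rw [ivq_pos ⟨hl.le, not_lt.1 hr⟩, ivq_pos ⟨hl'.le, by linarith⟩]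
        simp [hl.ne]
    · rw [ivq_pos ⟨hl.le, by linarith⟩, ivq_neg (fun hx => absurd hx.1 (by linarith))]
      simp [hl]
    · rw [ivq_neg (fun hx => absurd hx.1 (by linarith)),
        ivq_neg (fun hx => absurd hx.1 (by linarith))]
      simp [hl.ne']
  rw [← Finset.sum_fiberwise_of_maps_to (t := s.image l) (g := l)
    (fun i hi => Finset.mem_image_of_mem l hi)]
  exact Finset.sum_eq_zero fun t _ => key t

lemma euler_real {ι : Type*} (s : Finset ι) (c : ι → ℚ) (K : ι → Set ℝ)
    (hK : ∀ i ∈ s, IsCompact (K i)) (hc : ∀ i ∈ s, Convex ℝ (K i))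
    (h : ∀ t, ∑ i ∈ s, c i * ivq (t ∈ K i) = 0) :
    ∑ i ∈ s, c i * ivq (K i).Nonempty = 0 := by
  classical
  have hI : ∀ i ∈ s.filter (fun i => (K i).Nonempty), K i = Set.Icc (sInf (K i)) (sSup (K i)) := by
    intro i hi
    rw [Finset.mem_filter] at hi
    exact eq_Icc_of_connected_compact ⟨hi.2, (hc i hi.1).isPreconnected⟩ (hK i hi.1)
  have h2 : ∑ i ∈ s.filter (fun i => (K i).Nonempty), c i = 0 := by
    refine euler_Icc _ c (fun i => sInf (K i)) (fun i => sSup (K i)) ?_ ?_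
    · intro i hi
      have h3 := hI i hi
      rw [Finset.mem_filter] at hi
      obtain ⟨x, hx⟩ := hi.2
      rw [h3] at hx
      exact hx.1.trans hx.2
    · intro t
      rw [← h t, Finset.sum_filter]
      refine Finset.sum_congr rfl fun i hi => ?_
      split_ifs with hn
      · rw [← hI i (Finset.mem_filter.2 ⟨hi, hn⟩)]
      · rw [ivq_neg (fun hx => hn ⟨t, hx⟩), mul_zero]
  rw [← h2, Finset.sum_filter]
  refine Finset.sum_congr rfl fun i hi => ?_
  split_ifs with hn
  · rw [ivq_pos hn, mul_one]
  · rw [ivq_neg hn, mul_zero]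

/-- Linear relations between indicator functions of compact convex subsets of `ℝⁿ` are preserved
by the Euler characteristic. The induction step projects away one coordinate. -/
lemma euler_fin {ι : Type*} (n : ℕ) (s : Finset ι) (c : ι → ℚ) (K : ι → Set (Fin n → ℝ))
    (hK : ∀ i ∈ s, IsCompact (K i)) (hc : ∀ i ∈ s, Convex ℝ (K i))
    (h : ∀ x, ∑ i ∈ s, c i * ivq (x ∈ K i) = 0) :
    ∑ i ∈ s, c i * ivq (K i).Nonempty = 0 := by
  induction n with
  | zero =>
    rw [← h 0]
    refine Finset.sum_congr rfl fun i _ => ?_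
    rw [ivq_congr]
    exact ⟨fun ⟨x, hx⟩ => Subsingleton.elim x 0 ▸ hx, fun hx => ⟨0, hx⟩⟩
  | succ n ih =>
    let T : (Fin (n + 1) → ℝ) →ₗ[ℝ] (Fin n → ℝ) := LinearMap.funLeft ℝ ℝ Fin.succ
    have hT : Continuous T := LinearMap.continuous_of_finiteDimensional T
    have hTa : ∀ y, T y = Fin.tail y := fun y => rfl
    have := ih (fun i => T '' K i) (fun i hi => (hK i hi).image hT)
      (fun i hi => (hc i hi).linear_image T) ?_
    · simpa only [Set.image_nonempty] using this
    · intro x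
      have hx := euler_real s c (fun i => {t : ℝ | (Fin.cons t x : Fin (n + 1) → ℝ) ∈ K i})
        ?_ ?_ (fun t => h (Fin.cons t x))
      · rw [← hx]
        refine Finset.sum_congr rfl fun i _ => ?_
        rw [ivq_congr]
        constructor
        · rintro ⟨y, hy, rfl⟩
          refine ⟨y 0, ?_⟩
          change (Fin.cons (y 0) (T y) : Fin (n + 1) → ℝ) ∈ K i
          rw [hTa, Fin.cons_self_tail]
          exact hy
        · rintro ⟨t, ht⟩
          exact ⟨_, ht, by rw [hTa, Fin.tail_cons]⟩
      · intro i hi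
        have hcl : IsClosed {t : ℝ | (Fin.cons t x : Fin (n + 1) → ℝ) ∈ K i} :=
          (hK i hi).isClosed.preimage (by
            refine continuous_pi fun j => ?_
            refine Fin.cases ?_ (fun j => ?_) j
            · simpa using continuous_id'
            · simpa using continuous_const)
        refine IsCompact.of_isClosed_subset ((hK i hi).image (continuous_apply 0)) hcl ?_
        intro t ht
        exact ⟨_, ht, by simp⟩
      · intro i hi t ht t' ht' a b ha hb hab
        have := hc i hi ht ht' ha hb hab
        change (Fin.cons _ x : Fin (n + 1) → ℝ) ∈ K i
        convert this using 1
        funext j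
        refine Fin.cases ?_ (fun j => ?_) j
        · simp
        · simp [← add_mul, hab]

/-- The Euler characteristic, which is `1` on nonempty compact convex sets, respects linear relations
between indicator functions of compact convex sets. -/
lemma euler_char {ι : Type*} (s : Finset ι) (c : ι → ℚ) (K : ι → Set V)
    (hK : ∀ i ∈ s, IsCompact (K i)) (hc : ∀ i ∈ s, Convex ℝ (K i))
    (h : ∀ x, ∑ i ∈ s, c i * ivq (x ∈ K i) = 0) :
    ∑ i ∈ s, c i * ivq (K i).Nonempty = 0 := by
  let e := (Module.finBasis ℝ V).equivFunL
  have := euler_fin _ s c (fun i => e '' K i) (fun i hi => (hK i hi).image e.continuous)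
      (fun i hi => (hc i hi).linear_image e.toLinearEquiv.toLinearMap) ?_
  · simpa only [Set.image_nonempty] using this
  · intro x
    rw [← h (e.symm x)]
    refine Finset.sum_congr rfl fun i _ => ?_
    rw [ivq_congr]
    constructor
    · rintro ⟨y, hy, rfl⟩
      simpa using hy
    · intro hx
      exact ⟨_, hx, by simp⟩

/-! ### Root systems and dominance -/

/-- `R` is a reduced root system with finite Weyl group, `z` is a regular vector fixing the positive
roots, and `α`, `ϖ` are the simple roots and the fundamental weights. Simple roots are the
positive roots that are not a sum of two positive roots. -/
structure RootData (R : Finset V) (z : V) (n : ℕ) (α ϖ : Fin n → V) : Prop where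
  h0 : (0 : V) ∉ R
  hrefl : ∀ a ∈ R, ∀ b ∈ R, b - ((2 * ⟪b, a⟫) / ⟪a, a⟫) • a ∈ R
  hred : ∀ a ∈ R, ∀ c : ℝ, c • a ∈ (R : Set V) → c = 1 ∨ c = -1
  hWfin : (WeylGrp R : Set (V ≃ₗᵢ[ℝ] V)).Finite
  hn : n = Module.finrank ℝ V
  hz : ∀ b ∈ R, ⟪z, b⟫ ≠ 0
  hsimple : ∀ b : V,
      (b ∈ R ∧ 0 < ⟪z, b⟫ ∧
        ¬∃ c ∈ R, ∃ d ∈ R, 0 < ⟪z, c⟫ ∧ 0 < ⟪z, d⟫ ∧ b = c + d) ↔ ∃ i, α i = b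
  hϖ : ∀ i j, ⟪ϖ i, (2 / ⟪α j, α j⟫) • α j⟫ = if i = j then (1 : ℝ) else 0

/-- The orthogonal reflection in the hyperplane `a^⊥`. -/
noncomputable def rootRefl (a : V) : V ≃ₗᵢ[ℝ] V := (ℝ ∙ a)ᗮ.reflection

lemma rootRefl_apply (a x : V) : rootRefl a x = x - ((2 * ⟪x, a⟫) / ⟪a, a⟫) • a := by
  unfold rootRefl
  rw [Submodule.reflection_orthogonal_apply, Submodule.reflection_singleton_apply, neg_sub,
    real_inner_self_eq_norm_sq, real_inner_comm]
  simp only [RCLike.ofReal_real_eq_id, id]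
  rw [two_smul, mul_div_assoc, two_mul, add_smul]

lemma rootRefl_rootRefl (a x : V) : rootRefl a (rootRefl a x) = x := Submodule.reflection_reflection _ x

lemma rootRefl_inv (a : V) : (rootRefl a)⁻¹ = rootRefl a := Submodule.reflection_inv

lemma rootRefl_neg (a : V) : rootRefl (-a) = rootRefl a := by
  ext x
  simp [rootRefl_apply, neg_div]

lemma inner_rootRefl (a x y : V) : ⟪rootRefl a x, y⟫ = ⟪x, rootRefl a y⟫ := by
  rw [LinearIsometryEquiv.inner_map_eq_flip]
  congr 1

lemma rootRefl_comm (a b x : V) : rootRefl a (rootRefl b x) = rootRefl (rootRefl a b) (rootRefl a x) := by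
  rw [rootRefl_apply b, rootRefl_apply (rootRefl a b), map_sub, map_smul]
  simp only [LinearIsometryEquiv.inner_map_map]

lemma inv_apply_self (w : V ≃ₗᵢ[ℝ] V) (x : V) : w⁻¹ (w x) = x := w.symm_apply_apply x

lemma apply_inv_self (w : V ≃ₗᵢ[ℝ] V) (x : V) : w (w⁻¹ x) = x := w.apply_symm_apply x

lemma inner_inv (w : V ≃ₗᵢ[ℝ] V) (x y : V) : ⟪w⁻¹ x, y⟫ = ⟪x, w y⟫ := by
  rw [← LinearIsometryEquiv.inner_map_map w, apply_inv_self]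

lemma inner_apply (w : V ≃ₗᵢ[ℝ] V) (x y : V) : ⟪w x, y⟫ = ⟪x, w⁻¹ y⟫ := by
  rw [← LinearIsometryEquiv.inner_map_map w x, apply_inv_self]

lemma rootRefl_mem {R : Finset V} {a : V} (ha : a ∈ R) : rootRefl a ∈ WeylGrp R :=
  Subgroup.subset_closure ⟨a, ha, rootRefl_apply a⟩

/-- The closed dominant chamber: vectors pairing nonnegatively with every positive root. -/
def Dom (R : Finset V) (z y : V) : Prop := ∀ b ∈ R, 0 < ⟪z, b⟫ → 0 ≤ ⟪y, b⟫

/-- Every orbit meets the dominant chamber: take the orbit element with largest pairing with the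
strictly dominant vector `z`. -/
lemma exists_dom {R : Finset V} (hWfin : (WeylGrp R : Set (V ≃ₗᵢ[ℝ] V)).Finite) (z y : V) :
    ∃ w ∈ WeylGrp R, Dom R z (w⁻¹ y) := by
  obtain ⟨w, hw, hmax⟩ := Set.exists_max_image (WeylGrp R : Set (V ≃ₗᵢ[ℝ] V))
    (fun w => ⟪w⁻¹ y, z⟫) hWfin ⟨1, one_mem _⟩
  refine ⟨w, hw, fun b hb hzb => ?_⟩
  have h1 := hmax (w * rootRefl b) (mul_mem hw (rootRefl_mem hb))
  have h2 : (w * rootRefl b)⁻¹ y = rootRefl b (w⁻¹ y) := by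
    rw [mul_inv_rev, rootRefl_inv]; rfl
  simp only [h2] at h1
  rw [rootRefl_apply, inner_sub_left, real_inner_smul_left, real_inner_comm z b] at h1
  have hbb : 0 < ⟪b, b⟫ := by
    refine lt_of_le_of_ne real_inner_self_nonneg fun h => ?_
    rw [eq_comm, inner_self_eq_zero] at h
    simp [h] at hzb
  by_contra hneg
  push Not at hneg
  have : 2 * ⟪w⁻¹ y, b⟫ / ⟪b, b⟫ * ⟪z, b⟫ < 0 :=
    mul_neg_of_neg_of_pos (div_neg_of_neg_of_pos (by linarith) hbb) hzb
  linarith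

/-- The dual of the dominant chamber is pointed, and `z` is strictly positive on it away from the
origin, since `z - ε d` stays dominant for small `ε`. -/
lemma eq_zero_of_dom {R : Finset V} {z d : V} (h : ∀ y, Dom R z y → 0 ≤ ⟪y, d⟫)
    (hd : ⟪z, d⟫ ≤ 0) : d = 0 := by
  have h1 : ∀ᶠ ε : ℝ in nhdsWithin 0 (Set.Ioi 0), ∀ b ∈ R, 0 < ⟪z, b⟫ → 0 < ⟪z - ε • d, b⟫ := by
    refine (Filter.eventually_all_finset R).2 fun b _ => ?_
    by_cases hb : 0 < ⟪z, b⟫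
    · have hc : ContinuousAt (fun ε : ℝ => ⟪z - ε • d, b⟫) 0 := by fun_prop
      have h2 := hc.eventually_const_lt (u := 0) (by simpa using hb)
      filter_upwards [mem_nhdsWithin_of_mem_nhds h2] with ε hε _ using hε
    · exact Filter.Eventually.of_forall fun ε h => absurd h hb
  have h3 : ∀ᶠ ε : ℝ in nhdsWithin 0 (Set.Ioi 0), 0 < ε := self_mem_nhdsWithin
  obtain ⟨ε, h4, h5⟩ := (h1.and h3).exists
  have h6 := h (z - ε • d) fun b hb hzb => (h4 b hb hzb).le
  rw [inner_sub_left, real_inner_smul_left] at h6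
  have h7 : (0 : ℝ) ≤ ⟪d, d⟫ := real_inner_self_nonneg
  have h8 : ⟪d, d⟫ = 0 := by nlinarith
  exact inner_self_eq_zero.1 h8

lemma coneGen_isConvexCone (S : Set V) : IsConvexCone (coneGen S) :=
  ⟨fun _ hC => hC.1.1, fun _ hx _ hy _ _ ha hb hab C hC => hC.1.2.1 (hx C hC) (hy C hC) ha hb hab,
    fun c hc x hx C hC => hC.1.2.2 c hc x (hx C hC)⟩

lemma IsConvexCone.add {C : Set V} (hC : IsConvexCone C) {x y : V} (hx : x ∈ C) (hy : y ∈ C) :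
    x + y ∈ C := by
  have h : (1 / 2 : ℝ) • x + (1 / 2 : ℝ) • y ∈ C :=
    hC.2.1 hx hy (by norm_num) (by norm_num) (by norm_num)
  have h2 := hC.2.2 2 (by norm_num) _ h
  rw [← smul_add, smul_smul] at h2
  norm_num at h2
  exact h2

lemma IsConvexCone.sum {C : Set V} (hC : IsConvexCone C) {ι : Type*} (s : Finset ι) (f : ι → V)
    (h : ∀ i ∈ s, f i ∈ C) : ∑ i ∈ s, f i ∈ C := by
  classical
  induction s using Finset.induction_on with
  | empty => simpa using hC.1
  | insert a s ha ih =>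
    rw [Finset.sum_insert ha]
    exact hC.add (h a (by simp)) (ih fun i hi => h i (by simp [hi]))

namespace RootData

variable {R : Finset V} {z : V} {n : ℕ} {α ϖ : Fin n → V}

lemma self_pos (D : RootData R z n α ϖ) {b : V} (hb : b ∈ R) : 0 < ⟪b, b⟫ := by
  refine lt_of_le_of_ne real_inner_self_nonneg fun h => ?_
  rw [eq_comm, inner_self_eq_zero] at h
  exact D.h0 (h ▸ hb)

lemma rootRefl_root (D : RootData R z n α ϖ) {a b : V} (ha : a ∈ R) (hb : b ∈ R) : rootRefl a b ∈ R := by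
  rw [rootRefl_apply]
  exact D.hrefl a ha b hb

lemma neg_mem (D : RootData R z n α ϖ) {b : V} (hb : b ∈ R) : -b ∈ R := by
  have h := D.hrefl b hb b hb
  rw [mul_div_cancel_right₀ _ (D.self_pos hb).ne'] at h
  convert h using 1
  rw [two_smul]; abel

lemma weyl_root (D : RootData R z n α ϖ) {w : V ≃ₗᵢ[ℝ] V} (hw : w ∈ WeylGrp R) : ∀ b ∈ R, w b ∈ R := by
  have key : (∀ b ∈ R, w b ∈ R) ∧ ∀ b ∈ R, w⁻¹ b ∈ R := by
    induction hw using Subgroup.closure_induction with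
    | mem s hs =>
      obtain ⟨a, ha, hs⟩ := hs
      have : s = rootRefl a := by
        ext x; rw [hs, rootRefl_apply]
      subst this
      rw [rootRefl_inv]
      exact ⟨fun b hb => D.rootRefl_root ha hb, fun b hb => D.rootRefl_root ha hb⟩
    | one => exact ⟨fun b hb => hb, by rw [inv_one]; exact fun b hb => hb⟩
    | mul x y _ _ hx hy =>
      refine ⟨fun b hb => hx.1 _ (hy.1 b hb), ?_⟩
      rw [mul_inv_rev]
      exact fun b hb => hy.2 _ (hx.2 b hb)
    | inv x _ hx => exact ⟨hx.2, by rw [inv_inv]; exact hx.1⟩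
  exact key.1

lemma simple_mem (D : RootData R z n α ϖ) (i : Fin n) : α i ∈ R := ((D.hsimple (α i)).2 ⟨i, rfl⟩).1

lemma simple_pos (D : RootData R z n α ϖ) (i : Fin n) : 0 < ⟪z, α i⟫ := ((D.hsimple (α i)).2 ⟨i, rfl⟩).2.1

lemma weight_simple (D : RootData R z n α ϖ) (i j : Fin n) : ⟪ϖ i, α j⟫ = if i = j then ⟪α j, α j⟫ / 2 else 0 := by
  have h := D.hϖ i j
  have hp := D.self_pos (D.simple_mem j)
  rw [real_inner_smul_right] at h
  split_ifs at h ⊢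
  · field_simp at h
    linarith
  · rcases mul_eq_zero.1 h with h | h
    · exact absurd h (by positivity)
    · exact h

/-- The fundamental weights are dominant, because every positive root is a sum of simple roots. -/
lemma weight_dom (D : RootData R z n α ϖ) (i : Fin n) : Dom R z (ϖ i) := by
  by_contra hcon
  have hne : (R.filter fun b => 0 < ⟪z, b⟫ ∧ ⟪ϖ i, b⟫ < 0).Nonempty := by
    unfold Dom at hcon
    push Not at hcon
    obtain ⟨b, h1, h2, h3⟩ := hcon
    exact ⟨b, Finset.mem_filter.2 ⟨h1, h2, h3⟩⟩
  obtain ⟨b, hb, hmin⟩ := Finset.exists_min_image _ (fun b => ⟪z, b⟫) hne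
  rw [Finset.mem_filter] at hb
  obtain ⟨hbR, hbz, hbn⟩ := hb
  by_cases hdec : ∃ c ∈ R, ∃ d ∈ R, 0 < ⟪z, c⟫ ∧ 0 < ⟪z, d⟫ ∧ b = c + d
  · obtain ⟨c, hc, d, hd, hcz, hdz, rfl⟩ := hdec
    rw [inner_add_right] at hbn
    rcases lt_or_ge ⟪ϖ i, c⟫ 0 with h | h
    · have := hmin c (Finset.mem_filter.2 ⟨hc, hcz, h⟩)
      rw [inner_add_right] at this
      linarith
    · have := hmin d (Finset.mem_filter.2 ⟨hd, hdz, by linarith⟩)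
      rw [inner_add_right] at this
      linarith
  · obtain ⟨j, rfl⟩ := (D.hsimple b).1 ⟨hbR, hbz, hdec⟩
    rw [D.weight_simple] at hbn
    have hp := D.self_pos (D.simple_mem j)
    split_ifs at hbn <;> linarith

/-- The fundamental weights are dual to the simple coroots, so they give coordinates in the basis
of simple roots. -/
lemma expand (D : RootData R z n α ϖ) (x : V) : x = ∑ i, (2 * ⟪ϖ i, x⟫ / ⟪α i, α i⟫) • α i := by
  have hpair : ∀ (c : Fin n → ℝ) i, ⟪ϖ i, ∑ j, c j • α j⟫ = c i * (⟪α i, α i⟫ / 2) := by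
    intro c i
    simp [inner_sum, real_inner_smul_right, D.weight_simple]
  have hli : LinearIndependent ℝ α := by
    rw [Fintype.linearIndependent_iff]
    intro c hc i
    have h1 := hpair c i
    rw [hc, inner_zero_right, eq_comm] at h1
    have hp := D.self_pos (D.simple_mem i)
    rcases mul_eq_zero.1 h1 with h | h
    · exact h
    · linarith
  have hsp : Submodule.span ℝ (Set.range α) = ⊤ :=
    hli.span_eq_top_of_card_eq_finrank' (by rw [Fintype.card_fin, D.hn])
  obtain ⟨c, hc⟩ := (Submodule.mem_span_range_iff_exists_fun ℝ).1 (hsp ▸ Submodule.mem_top : x ∈ _)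
  conv_lhs => rw [← hc]
  refine Finset.sum_congr rfl fun i _ => ?_
  have hp := (D.self_pos (D.simple_mem i)).ne'
  rw [← hc, hpair]
  congr 1
  field_simp

/-- The cone of positive roots is the dual of the dominant chamber. -/
lemma mem_cone_iff (D : RootData R z n α ϖ) (x : V) :
    x ∈ coneGen {b : V | b ∈ R ∧ 0 < ⟪z, b⟫} ↔ ∀ y, Dom R z y → 0 ≤ ⟪y, x⟫ := by
  constructor
  · intro hx y hy
    refine hx {x | 0 ≤ ⟪y, x⟫} ⟨⟨by simp, ?_, ?_⟩, fun b hb => hy b hb.1 hb.2⟩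
    · intro u hu v hv a b ha hb _
      simp only [Set.mem_ofPred_eq, inner_add_right, real_inner_smul_right] at *
      positivity
    · intro c hc u hu
      simp only [Set.mem_ofPred_eq, real_inner_smul_right] at *
      positivity
  · intro h
    rw [D.expand x]
    have hC := coneGen_isConvexCone {b : V | b ∈ R ∧ 0 < ⟪z, b⟫}
    refine hC.sum _ _ fun i _ => hC.2.2 _ ?_ _ ?_
    · have h1 := h _ (D.weight_dom i)
      have h2 := D.self_pos (D.simple_mem i)
      positivity
    · exact fun C hC => hC.2 ⟨D.simple_mem i, D.simple_pos i⟩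

/-- A simple reflection permutes the positive roots other than its own simple root. -/
lemma simple_rootRefl_pos (D : RootData R z n α ϖ) (i : Fin n) {b : V} (hb : b ∈ R) (hbz : 0 < ⟪z, b⟫) (hne : b ≠ α i) :
    0 < ⟪z, rootRefl (α i) b⟫ := by
  have hr := D.rootRefl_root (D.simple_mem i) hb
  rcases lt_or_gt_of_ne (D.hz _ hr) with hneg | hpos
  · exfalso
    have hcoef : ∀ j, j ≠ i → ⟪ϖ j, b⟫ = 0 := by
      intro j hj
      have h1 := D.weight_dom j b hb hbz
      have h2 := D.weight_dom j _ (D.neg_mem hr) (by rw [inner_neg_right]; linarith)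
      rw [rootRefl_apply, inner_neg_right, inner_sub_right, real_inner_smul_right,
        D.weight_simple, if_neg hj] at h2
      linarith
    have hexp := D.expand b
    rw [Finset.sum_eq_single i (fun j _ hj => by rw [hcoef j hj]; simp) (by simp)] at hexp
    have h3 := D.hred _ (D.simple_mem i) (2 * ⟪ϖ i, b⟫ / ⟪α i, α i⟫) (hexp ▸ hb)
    rcases h3 with h3 | h3
    · exact hne (by rw [hexp, h3, one_smul])
    · rw [hexp, h3, inner_smul_right] at hbz
      have := D.simple_pos i
      linarith
  · exact hpos

end RootData

/-! ### Minima in the directions of the chambers -/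

/-- `b` is the point of `M` that minimizes simultaneously all linear functionals in the chamber
`w · Dom`; equivalently `b` is the minimum of `M` for the cone `w · Cone(R⁺)`. -/
def ChMin (R : Finset V) (z : V) (w : V ≃ₗᵢ[ℝ] V) (M : Set V) (b : V) : Prop :=
  b ∈ M ∧ ∀ y, Dom R z y → ∀ v ∈ M, ⟪w y, b⟫ ≤ ⟪w y, v⟫

lemma ChMin.unique {R : Finset V} {z : V} {w : V ≃ₗᵢ[ℝ] V} {M : Set V} {b b' : V}
    (h : ChMin R z w M b) (h' : ChMin R z w M b') : b = b' := by
  have key : ∀ y, Dom R z y → ⟪y, w⁻¹ (b - b')⟫ = 0 := by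
    intro y hy
    rw [← inner_apply, inner_sub_right]
    linarith [h.2 y hy b' h'.1, h'.2 y hy b h.1]
  have h1 : w⁻¹ (b - b') = 0 := by
    refine eq_zero_of_dom (fun y hy => (key y hy).ge) (key z fun _ _ h => h.le).le
  rw [map_eq_zero_iff _ (w⁻¹).injective] at h1
  exact sub_eq_zero.1 h1

/-- Transport of minima along a group element. -/
lemma ChMin.image {R : Finset V} {z : V} {w : V ≃ₗᵢ[ℝ] V} {M : Set V} {b : V}
    (h : ChMin R z w M b) (w' : V ≃ₗᵢ[ℝ] V) : ChMin R z (w' * w) (w' '' M) (w' b) := by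
  refine ⟨⟨b, h.1, rfl⟩, ?_⟩
  rintro y hy _ ⟨v, hv, rfl⟩
  change ⟪w' (w y), w' b⟫ ≤ ⟪w' (w y), w' v⟫
  rw [LinearIsometryEquiv.inner_map_map, LinearIsometryEquiv.inner_map_map]
  exact h.2 y hy v hv

lemma inner_rootRefl_right (a x y : V) :
    ⟪x, rootRefl a y⟫ = ⟪x, y⟫ - 2 * ⟪y, a⟫ / ⟪a, a⟫ * ⟪x, a⟫ := by
  rw [rootRefl_apply, inner_sub_right, real_inner_smul_right]

lemma rootRefl_self (a : V) : rootRefl a a = -a :=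
  Submodule.reflection_orthogonalComplement_singleton_eq_neg a

/-- One step up in the Bruhat order on a `W`-orbit: reflect in a positive root `b` with which `u`
has negative pairing. -/
def BStep (R : Finset V) (z u v : V) : Prop :=
  ∃ b ∈ R, 0 < ⟪z, b⟫ ∧ ⟪u, b⟫ < 0 ∧ v = rootRefl b u

/-- The upper Bruhat interval of `u` (the bases of a Schubert matroid). -/
def upSet (R : Finset V) (z u : V) : Set V := {v | Relation.ReflTransGen (BStep R z) u v}

lemma upSet_closed {R : Finset V} {z u v b : V} (hv : v ∈ upSet R z u) (hb : b ∈ R)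
    (hbz : 0 < ⟪z, b⟫) (hvb : ⟪v, b⟫ < 0) : rootRefl b v ∈ upSet R z u :=
  Relation.ReflTransGen.tail hv ⟨b, hb, hbz, hvb, rfl⟩

lemma Dom.not_step {R : Finset V} {z y x : V} (hy : Dom R z y) : ¬ BStep R z y x := by
  rintro ⟨b, hb, hbz, hneg, -⟩
  exact absurd (hy b hb hbz) (by linarith)

namespace RootData

variable {R : Finset V} {z : V} {n : ℕ} {α ϖ : Fin n → V}

lemma mem_transl_iff (D : RootData R z n α ϖ) (w : V ≃ₗᵢ[ℝ] V) (b v : V) :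
    v ∈ transl b (w '' coneGen {b : V | b ∈ R ∧ 0 < ⟪z, b⟫}) ↔
      ∀ y, Dom R z y → ⟪w y, b⟫ ≤ ⟪w y, v⟫ := by
  constructor
  · rintro ⟨_, ⟨x, hx, rfl⟩, rfl⟩ y hy
    have := (D.mem_cone_iff x).1 hx y hy
    simp only [inner_add_right, LinearIsometryEquiv.inner_map_map]
    linarith
  · intro h
    refine ⟨v - b, ⟨w⁻¹ (v - b), (D.mem_cone_iff _).2 fun y hy => ?_, apply_inv_self w _⟩, ?_⟩
    · rw [← inner_apply, inner_sub_right]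
      linarith [h y hy]
    · simp

/-- The defining condition of a Coxeter matroid in terms of functionals, by duality of the cone of
positive roots and the dominant chamber. -/
lemma hull_iff (D : RootData R z n α ϖ) (w : V ≃ₗᵢ[ℝ] V) (M : Set V) (b : V) :
    convexHull ℝ M ⊆ transl b (w '' coneGen {b : V | b ∈ R ∧ 0 < ⟪z, b⟫}) ↔
      ∀ y, Dom R z y → ∀ v ∈ M, ⟪w y, b⟫ ≤ ⟪w y, v⟫ := by
  constructor
  · intro h y hy v hv
    exact (D.mem_transl_iff w b v).1 (h (subset_convexHull ℝ M hv)) y hy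
  · intro h
    refine convexHull_min (fun v hv => (D.mem_transl_iff w b v).2 fun y hy => h y hy v hv) ?_
    intro v hv v' hv' s t hs ht hst
    rw [mem_transl_iff D] at *
    intro y hy
    rw [inner_add_right, real_inner_smul_right, real_inner_smul_right]
    have hb : ⟪w y, b⟫ = s * ⟪w y, b⟫ + t * ⟪w y, b⟫ := by rw [← add_mul, hst, one_mul]
    rw [hb]
    exact add_le_add (mul_le_mul_of_nonneg_left (hv y hy) hs)
      (mul_le_mul_of_nonneg_left (hv' y hy) ht)

/-! ### Bruhat intervals are Coxeter matroids -/

/-- If `M` has all chamber minima and is closed under moving up along the root `a`, then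
`M ∪ s_a M` has all chamber minima: in a chamber on the negative side of `a` the minimum is that
of `M`, and the chambers on the other side are their mirror images. -/
lemma exists_isMin_union (D : RootData R z n α ϖ) {M : Set V} {a : V} (ha : a ∈ R)
    (hM : ∀ w ∈ WeylGrp R, ∃ b, ChMin R z w M b)
    (hup : ∀ v ∈ M, ⟪v, a⟫ < 0 → rootRefl a v ∈ M) :
    ∀ w ∈ WeylGrp R, ∃ b, ChMin R z w (M ∪ rootRefl a '' M) b := by
  have hneg : ∀ w ∈ WeylGrp R, (∀ y, Dom R z y → ⟪w y, a⟫ ≤ 0) →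
      ∃ b, ChMin R z w (M ∪ rootRefl a '' M) b := by
    intro w hw hwa
    obtain ⟨b, hb⟩ := hM w hw
    refine ⟨b, Or.inl hb.1, ?_⟩
    rintro y hy v (hv | ⟨m, hm, rfl⟩)
    · exact hb.2 y hy v hv
    · by_cases hma : ⟪m, a⟫ < 0
      · exact hb.2 y hy _ (hup m hm hma)
      · push Not at hma
        rw [inner_rootRefl_right]
        have h1 := hb.2 y hy m hm
        have h2 : 2 * ⟪m, a⟫ / ⟪a, a⟫ * ⟪w y, a⟫ ≤ 0 :=
          mul_nonpos_of_nonneg_of_nonpos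
            (div_nonneg (by linarith) (D.self_pos ha).le) (hwa y hy)
        linarith
  intro w hw
  have hr := D.weyl_root (inv_mem hw) a ha
  rcases lt_or_gt_of_ne (D.hz _ hr) with h | h
  · refine hneg w hw fun y hy => ?_
    have := hy _ (D.neg_mem hr) (by rw [inner_neg_right]; linarith)
    rw [inner_neg_right, ← inner_apply] at this
    linarith
  · obtain ⟨b, hb⟩ := hneg (rootRefl a * w) (mul_mem (rootRefl_mem ha) hw) fun y hy => by
      change ⟪rootRefl a (w y), a⟫ ≤ 0
      rw [inner_rootRefl, rootRefl_self, inner_neg_right, inner_apply]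
      linarith [hy _ hr h]
    have h1 := hb.image (rootRefl a)
    have h2 : rootRefl a * (rootRefl a * w) = w := by
      ext x; exact rootRefl_rootRefl a _
    have h3 : rootRefl a '' (M ∪ rootRefl a '' M) = M ∪ rootRefl a '' M := by
      rw [Set.image_union, Set.image_image]
      simp only [rootRefl_rootRefl, Set.image_id']
      rw [Set.union_comm]
    rw [h2, h3] at h1
    exact ⟨_, h1⟩

/-- Conjugation by `s_i` preserves steps up along positive roots other than `α_i`. -/
lemma step_conj (D : RootData R z n α ϖ) (i : Fin n) {u b : V} (hb : b ∈ R) (hbz : 0 < ⟪z, b⟫) (hub : ⟪u, b⟫ < 0)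
    (hne : b ≠ α i) : BStep R z (rootRefl (α i) u) (rootRefl (α i) (rootRefl b u)) :=
  ⟨rootRefl (α i) b, D.rootRefl_root (D.simple_mem i) hb, D.simple_rootRefl_pos i hb hbz hne,
    by rwa [LinearIsometryEquiv.inner_map_map], rootRefl_comm _ _ _⟩

/-- The lifting property of the Bruhat order: for `⟨u, α_i⟩ < 0` the upper interval of `u` is the
`s_i`-stable set generated by the upper interval of `s_i u`. -/
lemma upSet_eq (D : RootData R z n α ϖ) (i : Fin n) {u : V} (hu : ⟪u, α i⟫ < 0) :
    upSet R z u = upSet R z (rootRefl (α i) u) ∪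
      rootRefl (α i) '' upSet R z (rootRefl (α i) u) := by
  have hstep : BStep R z u (rootRefl (α i) u) := ⟨_, D.simple_mem i, D.simple_pos i, hu, rfl⟩
  ext v
  constructor
  · intro hv
    induction hv with
    | refl => exact Or.inr ⟨_, Relation.ReflTransGen.refl, rootRefl_rootRefl _ _⟩
    | tail _ hs ih =>
      obtain ⟨b, hb, hbz, hneg, rfl⟩ := hs
      rcases ih with ih | ⟨m, hm, rfl⟩
      · exact Or.inl (upSet_closed ih hb hbz hneg)
      · by_cases hne : b = α i
        · subst hne
          exact Or.inl (by rwa [rootRefl_rootRefl])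
        · have h := D.step_conj i hb hbz hneg hne
          rw [rootRefl_rootRefl] at h
          exact Or.inr ⟨_, Relation.ReflTransGen.tail hm h, rootRefl_rootRefl _ _⟩
  · have hsub : upSet R z (rootRefl (α i) u) ⊆ upSet R z u :=
      fun v hv => Relation.ReflTransGen.head hstep hv
    rintro (hv | ⟨m, hm, rfl⟩)
    · exact hsub hv
    · induction hm with
      | refl => rw [rootRefl_rootRefl]; exact Relation.ReflTransGen.refl
      | tail hp hs ih =>
        obtain ⟨b, hb, hbz, hneg, rfl⟩ := hs
        by_cases hne : b = α i
        · subst hne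
          rw [rootRefl_rootRefl]
          exact hsub hp
        · exact Relation.ReflTransGen.tail ih (D.step_conj i hb hbz hneg hne)

lemma dom_of_simple (D : RootData R z n α ϖ) {u : V} (hu : ∀ i, 0 ≤ ⟪u, α i⟫) : Dom R z u := by
  intro b hb hbz
  rw [D.expand b, inner_sum]
  refine Finset.sum_nonneg fun i _ => ?_
  rw [real_inner_smul_right]
  have h1 := D.weight_dom i b hb hbz
  have h2 := D.self_pos (D.simple_mem i)
  have h3 := hu i
  positivity

lemma z_step (D : RootData R z n α ϖ) {u v : V} (h : BStep R z u v) : ⟪z, u⟫ < ⟪z, v⟫ := by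
  obtain ⟨b, hb, hbz, hneg, rfl⟩ := h
  rw [inner_rootRefl_right]
  have := mul_neg_of_neg_of_pos
    (div_neg_of_neg_of_pos (show 2 * ⟪u, b⟫ < 0 by linarith) (D.self_pos hb)) hbz
  linarith

lemma dom_step (D : RootData R z n α ϖ) {u v y : V} (h : BStep R z u v) (hy : Dom R z y) : ⟪y, u⟫ ≤ ⟪y, v⟫ := by
  obtain ⟨b, hb, hbz, hneg, rfl⟩ := h
  rw [inner_rootRefl_right]
  have := mul_nonpos_of_nonpos_of_nonneg
    (div_neg_of_neg_of_pos (show 2 * ⟪u, b⟫ < 0 by linarith) (D.self_pos hb)).le (hy b hb hbz)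
  linarith

lemma upSet_dom (D : RootData R z n α ϖ) {u v y : V} (hv : v ∈ upSet R z u) (hy : Dom R z y) : ⟪y, u⟫ ≤ ⟪y, v⟫ := by
  induction hv with
  | refl => exact le_rfl
  | tail _ hs ih => exact ih.trans (D.dom_step hs hy)

/-- Upper Bruhat intervals have all chamber minima, by downward induction along `upSet_eq`;
at a dominant point the interval is a singleton. -/
lemma upSet_isMin (D : RootData R z n α ϖ) {O : Set V} (hO : O.Finite) (hOW : ∀ w ∈ WeylGrp R, ∀ u ∈ O, w u ∈ O) :
    ∀ u ∈ O, ∀ w ∈ WeylGrp R, ∃ b, ChMin R z w (upSet R z u) b := by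
  by_contra hcon
  let B : Set V := {u | u ∈ O ∧ ¬ ∀ w ∈ WeylGrp R, ∃ b, ChMin R z w (upSet R z u) b}
  have hBne : B.Nonempty := by
    by_contra hB
    exact hcon fun u hu => by
      by_contra h
      exact hB ⟨u, hu, h⟩
  obtain ⟨u, ⟨huO, hbad⟩, hmax⟩ := Set.exists_max_image B (fun u => ⟪z, u⟫)
    (hO.subset fun u hu => hu.1) hBne
  refine hbad ?_
  by_cases hs : ∃ i, ⟪u, α i⟫ < 0
  · obtain ⟨i, hi⟩ := hs
    rw [D.upSet_eq i hi]
    refine D.exists_isMin_union (D.simple_mem i) ?_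
      fun v hv hva => upSet_closed hv (D.simple_mem i) (D.simple_pos i) hva
    by_contra hb
    have h1 := hmax _ ⟨hOW _ (rootRefl_mem (D.simple_mem i)) u huO, hb⟩
    have h2 := D.z_step ⟨_, D.simple_mem i, D.simple_pos i, hi, rfl⟩
    linarith
  · push Not at hs
    have hd := D.dom_of_simple hs
    have hsing : ∀ v ∈ upSet R z u, v = u := by
      intro v hv
      rcases Relation.ReflTransGen.cases_head hv with h | ⟨x, hx, -⟩
      · exact h.symm
      · exact absurd hx hd.not_step
    exact fun w _ => ⟨u, Relation.ReflTransGen.refl, fun y _ v hv => by rw [hsing v hv]⟩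

/-! ### The dominant point is the top of its orbit -/

lemma below_simple (D : RootData R z n α ϖ) {y : V} (hy : Dom R z y) (i : Fin n) {x : V}
    (hx : Relation.ReflTransGen (BStep R z) x y) :
    Relation.ReflTransGen (BStep R z) (rootRefl (α i) x) y := by
  have hdown : ∀ x, Relation.ReflTransGen (BStep R z) x y → 0 ≤ ⟪x, α i⟫ →
      Relation.ReflTransGen (BStep R z) (rootRefl (α i) x) y := by
    intro x hx h
    rcases h.eq_or_lt with h | h
    · rwa [rootRefl_apply, ← h, mul_zero, zero_div, zero_smul, sub_zero]
    · refine Relation.ReflTransGen.head ⟨_, D.simple_mem i, D.simple_pos i, ?_,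
        (rootRefl_rootRefl (α i) x).symm⟩ hx
      rw [inner_rootRefl, rootRefl_self, inner_neg_right]
      linarith
  induction hx using Relation.ReflTransGen.head_induction_on with
  | refl => exact hdown y Relation.ReflTransGen.refl (hy _ (D.simple_mem i) (D.simple_pos i))
  | head hs hp ih =>
    obtain ⟨b, hb, hbz, hneg, rfl⟩ := hs
    by_cases hne : b = α i
    · subst hne
      exact hp
    · exact Relation.ReflTransGen.head (D.step_conj i hb hbz hneg hne) ih

/-- A set stable under simple reflections is stable under all reflections: a positive root that
is not simple is carried to a lower one by a simple reflection. -/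
lemma stable_of_simple (D : RootData R z n α ϖ) {S : Set V} (hS : ∀ i, ∀ x ∈ S, rootRefl (α i) x ∈ S) :
    ∀ b ∈ R, ∀ x ∈ S, rootRefl b x ∈ S := by
  have hpos : ∀ b ∈ R, 0 < ⟪z, b⟫ → ∀ x ∈ S, rootRefl b x ∈ S := by
    by_contra hcon
    let B : Set V := {b | b ∈ R ∧ 0 < ⟪z, b⟫ ∧ ¬ ∀ x ∈ S, rootRefl b x ∈ S}
    have hBne : B.Nonempty := by
      by_contra hB
      exact hcon fun b hb hbz => by
        by_contra h
        exact hB ⟨b, hb, hbz, h⟩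
    obtain ⟨b, ⟨hb, hbz, hbad⟩, hmin⟩ := Set.exists_min_image B (fun u => ⟪z, u⟫)
      (R.finite_toSet.subset fun u hu => hu.1) hBne
    have hex : ∃ i, 0 < ⟪b, α i⟫ := by
      by_contra h
      push Not at h
      have h1 := D.self_pos hb
      have h2 : ⟪b, b⟫ ≤ 0 := by
        conv_lhs => rw [D.expand b, sum_inner]
        refine Finset.sum_nonpos fun i _ => ?_
        rw [← D.expand b, real_inner_smul_left]
        have h3 := D.weight_dom i b hb hbz
        have h4 := D.self_pos (D.simple_mem i)
        rw [real_inner_comm b (α i)]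
        exact mul_nonpos_of_nonneg_of_nonpos (by positivity) (h i)
      linarith
    obtain ⟨i, hi⟩ := hex
    by_cases hne : b = α i
    · subst hne
      exact hbad (hS i)
    · have hr := D.rootRefl_root (D.simple_mem i) hb
      have hrz := D.simple_rootRefl_pos i hb hbz hne
      have hgood : ∀ x ∈ S, rootRefl (rootRefl (α i) b) x ∈ S := by
        by_contra h
        have h1 := hmin _ ⟨hr, hrz, h⟩
        simp only [inner_rootRefl_right] at h1
        have h2 := D.simple_pos i
        have h3 := D.self_pos (D.simple_mem i)
        have h4 : 0 < 2 * ⟪b, α i⟫ / ⟪α i, α i⟫ * ⟪z, α i⟫ := by positivity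
        linarith
      refine hbad fun x hx => ?_
      have h5 := hS i _ (hgood _ (hS i x hx))
      rwa [← rootRefl_comm, rootRefl_rootRefl] at h5
  intro b hb x hx
  rcases lt_or_gt_of_ne (D.hz b hb) with h | h
  · rw [← rootRefl_neg]
    exact hpos _ (D.neg_mem hb) (by rw [inner_neg_right]; linarith) x hx
  · exact hpos b hb h x hx

/-- In the Bruhat order every point of the orbit of a dominant `y` lies below `y`: the set of
points below `y` is stable under simple reflections, hence under `W`. -/
lemma orbit_below (D : RootData R z n α ϖ) {y : V} (hy : Dom R z y) {w : V ≃ₗᵢ[ℝ] V} (hw : w ∈ WeylGrp R) :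
    Relation.ReflTransGen (BStep R z) (w y) y := by
  let S : Set V := {x | Relation.ReflTransGen (BStep R z) x y}
  have hS := D.stable_of_simple (S := S) fun i x hx => D.below_simple hy i hx
  have key : (∀ x ∈ S, w x ∈ S) ∧ ∀ x ∈ S, w⁻¹ x ∈ S := by
    induction hw using Subgroup.closure_induction with
    | mem s hs =>
      obtain ⟨a, ha, hs⟩ := hs
      have : s = rootRefl a := by
        ext x; rw [hs, rootRefl_apply]
      subst this
      rw [rootRefl_inv]
      exact ⟨hS a ha, hS a ha⟩
    | one => exact ⟨fun b hb => hb, by rw [inv_one]; exact fun b hb => hb⟩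
    | mul x y _ _ hx hy =>
      refine ⟨fun b hb => hx.1 _ (hy.1 b hb), ?_⟩
      rw [mul_inv_rev]
      exact fun b hb => hy.2 _ (hx.2 b hb)
    | inv x _ hx => exact ⟨hx.2, by rw [inv_inv]; exact hx.1⟩
  exact key.1 y Relation.ReflTransGen.refl

/-- Moving a dominant functional `y` down its orbit does not increase its minimum on an upper
Bruhat interval. -/
lemma upSet_inner_le (D : RootData R z n α ϖ) {y u x : V} (hx : Relation.ReflTransGen (BStep R z) x y) :
    ∃ v ∈ upSet R z u, ⟪x, v⟫ ≤ ⟪y, u⟫ := by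
  induction hx using Relation.ReflTransGen.head_induction_on with
  | refl => exact ⟨u, Relation.ReflTransGen.refl, le_rfl⟩
  | @head x x1 hs hp ih =>
    obtain ⟨b, hb, hbz, hneg, rfl⟩ := hs
    obtain ⟨v, hv, hle⟩ := ih
    rw [inner_rootRefl] at hle
    by_cases hvb : ⟪v, b⟫ < 0
    · exact ⟨_, upSet_closed hv hb hbz hvb, hle⟩
    · refine ⟨v, hv, le_trans ?_ hle⟩
      push Not at hvb
      rw [inner_rootRefl_right]
      have := mul_nonpos_of_nonneg_of_nonpos
        (div_nonneg (show 0 ≤ 2 * ⟪v, b⟫ by linarith) (D.self_pos hb).le) hneg.le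
      linarith

/-- Triangularity of `𝒢` on upper Bruhat intervals: `u - w⁻¹ b` pairs nonnegatively with the
dominant chamber by `upSet_inner_le`. -/
lemma upSet_isMin_lt (D : RootData R z n α ϖ) {u b : V} {w : V ≃ₗᵢ[ℝ] V} (hw : w ∈ WeylGrp R)
    (hb : ChMin R z w (upSet R z u) b) : w⁻¹ b = u ∨ ⟪z, w⁻¹ b⟫ < ⟪z, u⟫ := by
  have key : ∀ y, Dom R z y → 0 ≤ ⟪y, u - w⁻¹ b⟫ := by
    intro y hy
    obtain ⟨v, hv, hle⟩ := D.upSet_inner_le (u := u) (D.orbit_below hy hw)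
    have := hb.2 y hy v hv
    rw [inner_sub_right, ← inner_apply]
    linarith
  rcases lt_or_ge ⟪z, w⁻¹ b⟫ ⟪z, u⟫ with h | h
  · exact Or.inr h
  · have := eq_zero_of_dom key (by rw [inner_sub_right]; linarith)
    exact Or.inl (sub_eq_zero.1 this).symm

end RootData

/-! ### Chamber minima determine the indicator function linearly -/

/-- If a formal combination of points vanishes, so does its sum against any function of the
points; here the function is the truth value of `p`. -/
lemma sum_ivq_pred {ι : Type*} (s : Finset ι) (c : ι → ℚ) (m : ι → V)
    (h : ∀ u, ∑ i ∈ s, c i * ivq (m i = u) = 0) (p : V → Prop) :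
    ∑ i ∈ s, c i * ivq (p (m i)) = 0 := by
  classical
  have h1 : ∀ i ∈ s, ivq (p (m i)) = ∑ u ∈ s.image m, ivq (p u) * ivq (m i = u) := by
    intro i hi
    rw [Finset.sum_eq_single_of_mem (m i) (Finset.mem_image_of_mem m hi)
      (fun u _ hu => by rw [ivq_neg hu.symm, mul_zero]), ivq_pos rfl, mul_one]
  rw [Finset.sum_congr rfl fun i hi => by rw [h1 i hi, Finset.mul_sum], Finset.sum_comm]
  refine Finset.sum_eq_zero fun u _ => ?_
  have h2 : ∀ i ∈ s, c i * (ivq (p u) * ivq (m i = u)) = ivq (p u) * (c i * ivq (m i = u)) :=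
    fun i _ => by ring
  rw [Finset.sum_congr rfl h2, ← Finset.mul_sum, h u, mul_zero]

/-- A point lies outside a polytope iff some functional separates it with margin `1`. -/
lemma notMem_hull_iff {M : Set V} (hM : M.Finite) (x : V) :
    x ∉ convexHull ℝ M ↔ ∃ y : V, ∀ p ∈ M, ⟪y, x⟫ + 1 ≤ ⟪y, p⟫ := by
  constructor
  · intro hx
    obtain ⟨f, u, hfx, hf⟩ := geometric_hahn_banach_point_closed (convex_convexHull ℝ M)
      (hM.isCompact_convexHull ℝ).isClosed hx
    refine ⟨(u - f x)⁻¹ • (InnerProductSpace.toDual ℝ V).symm f, fun p hp => ?_⟩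
    have h1 := hf p (subset_convexHull ℝ M hp)
    rw [real_inner_smul_left, real_inner_smul_left, InnerProductSpace.toDual_symm_apply,
      InnerProductSpace.toDual_symm_apply]
    have h2 : 0 < u - f x := by linarith
    have h3 : (u - f x)⁻¹ * f p - (u - f x)⁻¹ * f x = (u - f x)⁻¹ * (f p - f x) := by ring
    have h4 : 1 ≤ (u - f x)⁻¹ * (f p - f x) := by
      rw [inv_mul_eq_div, le_div_iff₀ h2]
      linarith
    linarith
  · rintro ⟨y, hy⟩ hx
    have h1 : convexHull ℝ M ⊆ {p | ⟪y, x⟫ + 1 ≤ ⟪y, p⟫} :=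
      convexHull_min hy (convex_halfSpace_ge (innerₛₗ ℝ y).isLinear _)
    have h2 : ⟪y, x⟫ + 1 ≤ ⟪y, x⟫ := h1 hx
    linarith

/-- If a formal combination of polytopes has vanishing combination of chamber minima, then the
same combination of indicator functions vanishes. For a fixed `x` the functionals separating `x`
from the `i`-th polytope form a compact convex set (once bounded by a large radius), which is
empty exactly when `x` is in the polytope, and whose indicator is a function of the chamber
minima. Its Euler characteristic is therefore linear in the chamber minima. -/
lemma indicator_sum_eq_zero {R : Finset V} {z : V}
    (hWfin : (WeylGrp R : Set (V ≃ₗᵢ[ℝ] V)).Finite) {ι : Type*} (s : Finset ι) (c : ι → ℚ)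
    (M : ι → Set V) (m : ι → (V ≃ₗᵢ[ℝ] V) → V) (hM : ∀ i ∈ s, (M i).Finite)
    (hm : ∀ i ∈ s, ∀ w ∈ WeylGrp R, ChMin R z w (M i) (m i w))
    (h : ∀ w ∈ WeylGrp R, ∀ u, ∑ i ∈ s, c i * ivq (m i w = u) = 0) (x : V) :
    ∑ i ∈ s, c i * ivq (x ∈ convexHull ℝ (M i)) = 0 := by
  classical
  have hsep : ∀ i, ∃ y : V, i ∈ s → x ∉ convexHull ℝ (M i) → ∀ p ∈ M i, ⟪y, x⟫ + 1 ≤ ⟪y, p⟫ := by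
    intro i
    by_cases hi : i ∈ s ∧ x ∉ convexHull ℝ (M i)
    · obtain ⟨y, hy⟩ := (notMem_hull_iff (hM i hi.1) x).1 hi.2
      exact ⟨y, fun _ _ => hy⟩
    · exact ⟨0, fun h1 h2 => absurd ⟨h1, h2⟩ hi⟩
  choose Y hY using hsep
  let r : ℝ := ∑ i ∈ s, ‖Y i‖
  let K : ι → Set V := fun i =>
    Metric.closedBall 0 r ∩ {y | ∀ p ∈ M i, ⟪y, x⟫ + 1 ≤ ⟪y, p⟫}
  have hKn : ∀ i ∈ s, ivq (K i).Nonempty = 1 - ivq (x ∈ convexHull ℝ (M i)) := by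
    intro i hi
    by_cases hx : x ∈ convexHull ℝ (M i)
    · rw [ivq_pos hx, ivq_neg, sub_self]
      rintro ⟨y, -, hy⟩
      exact (notMem_hull_iff (hM i hi) x).2 ⟨y, hy⟩ hx
    · rw [ivq_neg hx, ivq_pos, sub_zero]
      refine ⟨Y i, ?_, hY i hi hx⟩
      rw [mem_closedBall_zero_iff]
      exact Finset.single_le_sum (f := fun i => ‖Y i‖) (fun _ _ => norm_nonneg _) hi
  have hE := euler_char s c K ?_ ?_ ?_
  · rw [Finset.sum_congr rfl fun i hi => by rw [hKn i hi, mul_sub, mul_one],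
      Finset.sum_sub_distrib] at hE
    have h1 := sum_ivq_pred s c (fun i => m i 1) (h 1 (one_mem _)) (fun _ => True)
    simp only [ivq_pos trivial, mul_one] at h1
    linarith
  · intro i _
    refine (isCompact_closedBall 0 r).inter_right ?_
    have : {y : V | ∀ p ∈ M i, ⟪y, x⟫ + 1 ≤ ⟪y, p⟫} =
        ⋂ p ∈ M i, {y : V | ⟪y, x⟫ + 1 ≤ ⟪y, p⟫} := by
      ext y; simp
    rw [this]
    exact isClosed_biInter fun p _ => isClosed_le (by fun_prop) (by fun_prop)
  · intro i _
    refine (convex_closedBall 0 r).inter ?_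
    intro y hy y' hy' a b ha hb hab p hp
    have h1 := mul_le_mul_of_nonneg_left (hy p hp) ha
    have h2 := mul_le_mul_of_nonneg_left (hy' p hp) hb
    simp only [inner_add_left, real_inner_smul_left]
    nlinarith
  · intro y
    by_cases hy : y ∈ Metric.closedBall (0 : V) r
    · obtain ⟨w, hw, hdom⟩ := exists_dom hWfin z y
      rw [← sum_ivq_pred s c (fun i => m i w) (h w hw) (fun v => ⟪y, x⟫ + 1 ≤ ⟪y, v⟫)]
      refine Finset.sum_congr rfl fun i hi => ?_
      rw [ivq_congr]
      obtain ⟨hmem, hmin⟩ := hm i hi w hw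
      have hmin := hmin _ hdom
      rw [apply_inv_self] at hmin
      exact ⟨fun hK => hK.2 _ hmem, fun hle => ⟨hy, fun p hp => hle.trans (hmin p hp)⟩⟩
    · exact Finset.sum_eq_zero fun i _ => by rw [ivq_neg fun hK => hy hK.1, mul_zero]

/-- Valuativity extends from integral to rational coefficients and to arbitrary finite index
sets, by clearing denominators. -/
lemma valuative_rat {A : Type*} [AddCommGroup A] [Module ℚ A] {Mat : Set (Set V)}
    {g : Set V → A}
    (hg : ∀ (k : ℕ) (a : Fin k → ℤ) (M : Fin k → Set V), (∀ i, M i ∈ Mat) →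
        (∑ i, a i • indic (convexHull ℝ (M i))) = 0 → (∑ i, a i • g (M i)) = 0)
    {ι : Type*} (s : Finset ι) (c : ι → ℚ) (M : ι → Set V) (hM : ∀ i ∈ s, M i ∈ Mat)
    (h : ∀ x, ∑ i ∈ s, c i * ivq (x ∈ convexHull ℝ (M i)) = 0) :
    ∑ i ∈ s, c i • g (M i) = 0 := by
  classical
  obtain ⟨N, hN⟩ := IsLocalization.exist_integer_multiples (nonZeroDivisors ℤ) s c
  have hN0 : ((N : ℤ) : ℚ) ≠ 0 := by
    exact_mod_cast nonZeroDivisors.ne_zero N.2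
  have hN' : ∀ i, ∃ a : ℤ, i ∈ s → (a : ℚ) = (N : ℤ) * c i := by
    intro i
    by_cases hi : i ∈ s
    · obtain ⟨a, ha⟩ := hN i hi
      exact ⟨a, fun _ => by simpa using ha⟩
    · exact ⟨0, fun h => absurd h hi⟩
  choose a ha using hN'
  have key := hg s.card (fun j => a (s.equivFin.symm j)) (fun j => M (s.equivFin.symm j))
    (fun j => hM _ (s.equivFin.symm j).2) ?_
  · rw [Equiv.sum_comp s.equivFin.symm (fun i : s => a i • g (M i)),
      Finset.sum_coe_sort s (fun i => a i • g (M i))] at key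
    have h1 : ((N : ℤ) : ℚ) • ∑ i ∈ s, c i • g (M i) = 0 := by
      rw [← key, Finset.smul_sum]
      refine Finset.sum_congr rfl fun i hi => ?_
      rw [smul_smul, ← ha i hi, Int.cast_smul_eq_zsmul]
    exact (smul_eq_zero.1 h1).resolve_left hN0
  · funext x
    rw [Equiv.sum_comp s.equivFin.symm (fun i : s => a i • indic (convexHull ℝ (M i))),
      Finset.sum_coe_sort s (fun i => a i • indic (convexHull ℝ (M i))), Finset.sum_apply]
    have h1 : ((∑ i ∈ s, (a i • indic (convexHull ℝ (M i))) x : ℤ) : ℚ) = 0 := by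
      rw [← mul_zero ((N : ℤ) : ℚ), ← h x, Finset.mul_sum, Int.cast_sum]
      refine Finset.sum_congr rfl fun i hi => ?_
      rw [← mul_assoc, ← ha i hi]
      by_cases hx : x ∈ convexHull ℝ (M i) <;> simp [indic, hx, ivq]
    exact_mod_cast h1

/-- the `𝒢`-invariant is the universal valuative invariant of Coxeter matroids
of type `(Φ, I)`: every valuative invariant with values in a `ℚ`-vector space factors uniquely
through `𝒢` via a `ℚ`-linear map. -/
theorem G_invariant_universal {A : Type*} [AddCommGroup A] [Module ℚ A]
    (R : Finset V) (h0 : (0 : V) ∉ R)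
    (hspan : Submodule.span ℝ (R : Set V) = ⊤)
    (hrefl : ∀ a ∈ R, ∀ b ∈ R, b - ((2 * ⟪b, a⟫) / ⟪a, a⟫) • a ∈ R)
    (hred : ∀ a ∈ R, ∀ c : ℝ, c • a ∈ (R : Set V) → c = 1 ∨ c = -1)
    (hWfin : (WeylGrp R : Set (V ≃ₗᵢ[ℝ] V)).Finite)
    (n : ℕ) (hn : n = Module.finrank ℝ V)
    (z : V) (hz : ∀ b ∈ R, ⟪z, b⟫ ≠ 0)
    (α : Fin n → V) (hαinj : Function.Injective α)
    (hsimple : ∀ b : V,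
      (b ∈ R ∧ 0 < ⟪z, b⟫ ∧
        ¬∃ c ∈ R, ∃ d ∈ R, 0 < ⟪z, c⟫ ∧ 0 < ⟪z, d⟫ ∧ b = c + d) ↔ ∃ i, α i = b)
    (ϖ : Fin n → V)
    (hϖ : ∀ i j, ⟪ϖ i, (2 / ⟪α j, α j⟫) • α j⟫ = if i = j then (1 : ℝ) else 0)
    (I : Finset (Fin n)) (δI : V) (hδ : δI = ∑ i ∈ Finset.univ \ I, ϖ i)
    (Cpos : Set V) (hCpos : Cpos = coneGen {b : V | b ∈ R ∧ 0 < ⟪z, b⟫})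
    (OrbS : Set V) (hOrb : OrbS = {u : V | ∃ w ∈ WeylGrp R, u = w δI})
    (Mat : Set (Set V)) (hMat : ∀ M : Set V, M ∈ Mat ↔
      (M.Nonempty ∧ M ⊆ OrbS ∧
        ∀ w ∈ WeylGrp R, ∃ b ∈ M, convexHull ℝ M ⊆ transl b (⇑w '' Cpos)))
    (mn : Set V → (V ≃ₗᵢ[ℝ] V) → V)
    (hmn : ∀ M ∈ Mat, ∀ w ∈ WeylGrp R,
      mn M w ∈ M ∧ convexHull ℝ M ⊆ transl (mn M w) (⇑w '' Cpos))
    (G : Set V → (↥OrbS → ℚ))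
    (hG : ∀ (M : Set V) (u : ↥OrbS),
      G M u = ∑ w ∈ hWfin.toFinset, ivq (w⁻¹ (mn M w) = u.1)) :
    ∀ g : Set V → A,
      (∀ (k : ℕ) (a : Fin k → ℤ) (M : Fin k → Set V), (∀ i, M i ∈ Mat) →
        (∑ i, a i • indic (convexHull ℝ (M i))) = 0 → (∑ i, a i • g (M i)) = 0) →
      (∀ w ∈ WeylGrp R, ∀ M ∈ Mat, g (⇑w '' M) = g M) →
      ∃! ψ : (↥OrbS → ℚ) →ₗ[ℚ] A, ∀ M ∈ Mat, ψ (G M) = g M := by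
  intro g hval hinv
  classical
  have D : RootData R z n α ϖ := ⟨h0, hrefl, hred, hWfin, hn, hz, hsimple, hϖ⟩
  have hOW : ∀ w ∈ WeylGrp R, ∀ u ∈ OrbS, w u ∈ OrbS := by
    intro w hw u hu
    rw [hOrb] at hu ⊢
    obtain ⟨w', hw', rfl⟩ := hu
    exact ⟨w * w', mul_mem hw hw', rfl⟩
  have hOfin : OrbS.Finite := by
    refine (hWfin.image fun w => w δI).subset ?_
    rw [hOrb]
    rintro u ⟨w, hw, rfl⟩
    exact ⟨w, hw, rfl⟩
  have hMat' : ∀ M : Set V, M ∈ Mat ↔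
      (M ⊆ OrbS ∧ ∀ w ∈ WeylGrp R, ∃ b, ChMin R z w M b) := by
    intro M
    rw [hMat, hCpos]
    constructor
    · rintro ⟨-, h1, h2⟩
      refine ⟨h1, fun w hw => ?_⟩
      obtain ⟨b, hb, hsub⟩ := h2 w hw
      exact ⟨b, hb, (D.hull_iff w M b).1 hsub⟩
    · rintro ⟨h1, h2⟩
      refine ⟨?_, h1, fun w hw => ?_⟩
      · obtain ⟨b, hb⟩ := h2 1 (one_mem _)
        exact ⟨b, hb.1⟩
      · obtain ⟨b, hb⟩ := h2 w hw
        exact ⟨b, hb.1, (D.hull_iff w M b).2 hb.2⟩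
  have hmn' : ∀ M ∈ Mat, ∀ w ∈ WeylGrp R, ChMin R z w M (mn M w) := by
    intro M hM w hw
    have := hmn M hM w hw
    rw [hCpos] at this
    exact ⟨this.1, (D.hull_iff w M _).1 this.2⟩
  have hmnO : ∀ M ∈ Mat, ∀ w ∈ WeylGrp R, w⁻¹ (mn M w) ∈ OrbS := fun M hM w hw =>
    hOW _ (inv_mem hw) _ (((hMat' M).1 hM).1 (hmn' M hM w hw).1)
  have hWM : ∀ w ∈ WeylGrp R, ∀ M ∈ Mat, w '' M ∈ Mat := by
    intro w hw M hM
    rw [hMat']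
    refine ⟨?_, fun w' hw' => ?_⟩
    · rintro _ ⟨v, hv, rfl⟩
      exact hOW w hw v (((hMat' M).1 hM).1 hv)
    · have := (hmn' M hM (w⁻¹ * w') (mul_mem (inv_mem hw) hw')).image w
      rw [mul_inv_cancel_left] at this
      exact ⟨_, this⟩
  have : Fintype ↥OrbS := hOfin.fintype
  -- Relations between the values of `𝒢` are relations between the values of `g`.
  have hker : ∀ (s : Finset ↥Mat) (c : ↥Mat → ℚ),
      ∑ M ∈ s, c M • G M = 0 → ∑ M ∈ s, c M • g M = 0 := by
    intro s c hc
    let T := s ×ˢ hWfin.toFinset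
    have hT : ∀ i ∈ T, i.2 ∈ WeylGrp R := by
      intro i hi
      simpa using (Finset.mem_product.1 hi).2
    have h1 : ∑ i ∈ T, c i.1 • g (i.2 '' i.1.1) = 0 := by
      refine valuative_rat hval T (fun i => c i.1) (fun i => i.2 '' i.1.1)
        (fun i hi => hWM _ (hT i hi) _ i.1.2) ?_
      refine indicator_sum_eq_zero hWfin (z := z) T (fun i => c i.1) (fun i => i.2 '' i.1.1)
        (fun i w => i.2 (mn i.1.1 (i.2⁻¹ * w))) ?_ ?_ ?_
      · intro i hi
        exact (hOfin.subset ((hMat' _).1 i.1.2).1).image _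
      · intro i hi w hw
        have := (hmn' _ i.1.2 (i.2⁻¹ * w) (mul_mem (inv_mem (hT i hi)) hw)).image i.2
        rwa [mul_inv_cancel_left] at this
      · intro v hv u
        have h2 : ∀ M ∈ s, ∑ w ∈ hWfin.toFinset, c M * ivq (w (mn M.1 (w⁻¹ * v)) = u) =
            c M * ∑ w ∈ hWfin.toFinset, ivq (w⁻¹ (mn M.1 w) = v⁻¹ u) := by
          intro M _
          rw [Finset.mul_sum]
          -- The substitution `x = w⁻¹ v` turns `w min^{w⁻¹ v}(M)` into `v x⁻¹ min^x(M)`.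
          refine Finset.sum_nbij' (fun w => w⁻¹ * v) (fun x => v * x⁻¹) ?_ ?_ ?_ ?_ ?_
          · intro w hw
            simp only [Set.Finite.mem_toFinset, SetLike.mem_coe] at *
            exact mul_mem (inv_mem hw) hv
          · intro w hw
            simp only [Set.Finite.mem_toFinset, SetLike.mem_coe] at *
            exact mul_mem hv (inv_mem hw)
          · intro w _
            group
          · intro w _
            group
          · intro w _
            congr 1
            refine ivq_congr ?_
            rw [mul_inv_rev, inv_inv]
            change _ ↔ v⁻¹ (w _) = _
            exact (v⁻¹).injective.eq_iff.symm
        rw [Finset.sum_product, Finset.sum_congr rfl h2]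
        by_cases hu : v⁻¹ u ∈ OrbS
        · have h3 := congrFun hc ⟨v⁻¹ u, hu⟩
          simpa [Finset.sum_apply, hG] using h3
        · refine Finset.sum_eq_zero fun M _ => ?_
          rw [Finset.sum_eq_zero, mul_zero]
          intro w hw
          refine ivq_neg fun he => hu ?_
          rw [← he]
          exact hmnO M.1 M.2 w (by simpa using hw)
    have h2 : ∀ M ∈ s, ∑ w ∈ hWfin.toFinset, c M • g (w '' M.1) =
        (hWfin.toFinset.card : ℚ) • c M • g M.1 := by
      intro M _
      rw [Finset.sum_congr rfl fun w hw => by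
        rw [hinv w (by simpa using hw) M.1 M.2], Finset.sum_const, Nat.cast_smul_eq_nsmul]
    rw [Finset.sum_product, Finset.sum_congr rfl h2, ← Finset.smul_sum] at h1
    refine (smul_eq_zero.1 h1).resolve_left ?_
    rw [← ne_eq, Nat.cast_ne_zero, Finset.card_ne_zero]
    exact ⟨1, by simp [one_mem]⟩
  -- `𝒢` of an upper Bruhat interval is triangular, hence the values of `𝒢` span.
  have hup : ∀ u ∈ OrbS, upSet R z u ∈ Mat := by
    intro u hu
    rw [hMat']
    refine ⟨fun v hv => ?_, D.upSet_isMin hOfin hOW u hu⟩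
    induction hv with
    | refl => exact hu
    | tail _ hs ih =>
      obtain ⟨b, hb, -, -, rfl⟩ := hs
      exact hOW _ (rootRefl_mem hb) _ ih
  let X : Submodule ℚ (↥OrbS → ℚ) := Submodule.span ℚ (G '' Mat)
  have hsingle : ∀ u : ↥OrbS, Pi.single u (1 : ℚ) ∈ X := by
    by_contra hcon
    push Not at hcon
    obtain ⟨u0, hu0⟩ := hcon
    obtain ⟨u, hbad, hmin⟩ := Set.exists_min_image
      {u : ↥OrbS | (Pi.single u (1 : ℚ) : ↥OrbS → ℚ) ∉ X} (fun u => ⟪z, u.1⟫) (Set.toFinite _) ⟨u0, hu0⟩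
    refine hbad ?_
    let M := upSet R z u.1
    have hMM : M ∈ Mat := hup u.1 u.2
    let x : (V ≃ₗᵢ[ℝ] V) → ↥OrbS := fun w =>
      if hw : w ∈ WeylGrp R then ⟨w⁻¹ (mn M w), hmnO M hMM w hw⟩ else u
    have hx : ∀ w ∈ WeylGrp R, (x w).1 = w⁻¹ (mn M w) := by
      intro w hw
      simp only [x, dif_pos hw]
    have hGx : G M = ∑ w ∈ hWfin.toFinset, Pi.single (x w) (1 : ℚ) := by
      funext v
      rw [hG, Finset.sum_apply]
      refine Finset.sum_congr rfl fun w hw => ?_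
      rw [← hx w (by simpa using hw), Pi.single_apply]
      by_cases hv : v = x w
      · rw [if_pos hv, ivq_pos (by rw [hv])]
      · rw [if_neg hv, ivq_neg fun h => hv (Subtype.ext h.symm)]
    have hx1 : x 1 = u := by
      refine Subtype.ext ?_
      rw [hx 1 (one_mem _), inv_one]
      refine (hmn' M hMM 1 (one_mem _)).unique ⟨Relation.ReflTransGen.refl, fun y hy v hv => ?_⟩
      exact D.upSet_dom hv hy
    rw [← Finset.sum_filter_add_sum_filter_not _ (fun w => x w = u)] at hGx
    have h1 : ∑ w ∈ hWfin.toFinset with ¬ x w = u, Pi.single (x w) (1 : ℚ) ∈ X := by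
      refine Submodule.sum_mem _ fun w hw => ?_
      rw [Finset.mem_filter] at hw
      have hwW : w ∈ WeylGrp R := by simpa using hw.1
      rcases D.upSet_isMin_lt hwW (hmn' M hMM w hwW) with h | h
      · exact absurd (Subtype.ext ((hx w hwW).trans h)) hw.2
      · by_contra hb
        have := hmin (x w) hb
        rw [hx w hwW] at this
        linarith
    have h2 : ∑ w ∈ hWfin.toFinset with x w = u, Pi.single (x w) (1 : ℚ) =
        ((hWfin.toFinset.filter fun w => x w = u).card : ℚ) • Pi.single u (1 : ℚ) := by
      rw [Finset.sum_congr rfl fun w hw => by rw [(Finset.mem_filter.1 hw).2],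
        Finset.sum_const, Nat.cast_smul_eq_nsmul]
    rw [h2] at hGx
    have h3 : G M ∈ X := Submodule.subset_span ⟨M, hMM, rfl⟩
    rw [hGx, Submodule.add_mem_iff_left _ h1] at h3
    refine (Submodule.smul_mem_iff _ ?_).1 h3
    rw [Nat.cast_ne_zero, Finset.card_ne_zero]
    exact ⟨1, Finset.mem_filter.2 ⟨by simp [one_mem], hx1⟩⟩
  have hX : X = ⊤ := by
    rw [eq_top_iff]
    intro f _
    rw [pi_eq_sum_univ' f]
    exact Submodule.sum_mem _ fun u _ => Submodule.smul_mem _ _ (by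
      convert hsingle u using 1)
  let L : (↥Mat →₀ ℚ) →ₗ[ℚ] (↥OrbS → ℚ) := Finsupp.linearCombination ℚ fun M : ↥Mat => G M.1
  let L' : (↥Mat →₀ ℚ) →ₗ[ℚ] A := Finsupp.linearCombination ℚ fun M : ↥Mat => g M.1
  have hL : L.range = ⊤ := by
    rw [Finsupp.range_linearCombination, ← hX]
    congr 1
    ext f
    simp
  obtain ⟨σ, hσ⟩ := LinearMap.exists_rightInverse_of_surjective L hL
  have hLL : ∀ c, L c = 0 → L' c = 0 := by
    intro c hc
    exact hker c.support c hc
  refine ⟨L' ∘ₗ σ, fun M hM => ?_, fun ψ hψ => ?_⟩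
  · have h1 : L (Finsupp.single ⟨M, hM⟩ 1) = G M := by simp [L]
    have h2 : L' (Finsupp.single ⟨M, hM⟩ 1) = g M := by simp [L']
    have h3 : L (σ (G M) - Finsupp.single ⟨M, hM⟩ 1) = 0 := by
      rw [map_sub, h1, sub_eq_zero]
      exact LinearMap.congr_fun hσ (G M)
    have h4 := hLL _ h3
    rw [map_sub, h2, sub_eq_zero] at h4
    exact h4
  · have h1 : ψ ∘ₗ L = L' := by
      refine Finsupp.lhom_ext' fun M => LinearMap.ext_ring ?_
      simpa [L, L'] using hψ M.1 M.2
    rw [← h1, LinearMap.comp_assoc, hσ, LinearMap.comp_id]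
end

section
/- Let (W,S) be a Coxeter system. For all w, b ∈ W there exist c, d ∈ W such that d ≤ b in the Bruhat order, b ≤ c in the Bruhat order, and c = w·d (product in W). -/
/-!
The pair is produced by the Demazure product `c = w ∗ b`. Writing `b = b's` with `b' < b` and
`d' ≤ b' ≤ c' = wd'`, put `d = d's`, `c = c's` when `c' < c's`, and `d = d'`, `c = c'` otherwise.
That `d ≤ b ≤ c` persists is the lifting property of the Bruhat order: if `u ≤ v` then `us ≤ v` or
`us ≤ vs` (`chain_mul_simple`).

The lifting property is proved one Bruhat step at a time. Let `u < ut` with `t` a reflection. If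
`t = s` then `us = ut`; otherwise `us < uts = us(sts)` (`length_lt_of_step`). This last fact is
the strong exchange property in disguise: for a reflection `t`, whether `ℓ(ut) < ℓ(u)` is decided
by the parity of the number of occurrences of `t` in the right inversion sequence of any word for
`u`. That this parity depends on `u` alone is shown by letting `W` act on `W × ZMod 2`, a simple
reflection `s` acting by `(x, e) ↦ (sxs, e + [x = s])`.
-/

/-- The Bruhat order on a Coxeter group: `u ≤ v` iff `v` is obtained from `u` by successively
multiplying on the right by reflections, each multiplication increasing the length. -/
def BruhatLE {B W : Type*} [Group W] {M : CoxeterMatrix B} (cs : CoxeterSystem M W)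
    (u v : W) : Prop :=
  ∃ t : List W, (∀ x ∈ t, cs.IsReflection x) ∧ v = u * t.prod ∧
    ∀ j < t.length,
      cs.length (u * (t.take j).prod) < cs.length (u * (t.take (j + 1)).prod)

namespace BruhatSandwich

open Relation

variable {B W : Type*} [Group W] {M : CoxeterMatrix B} (cs : CoxeterSystem M W)

/-! ### The inversion parity action -/

open Classical in
/-- The action `(x, e) ↦ (sxs, e + [x = s])` of a simple reflection `s` on `W × ZMod 2`. -/
noncomputable def simpleAct (i : B) : Function.End (W × ZMod 2) :=
  fun p => (cs.simple i * p.1 * cs.simple i, p.2 + if p.1 = cs.simple i then 1 else 0)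

lemma simple_mul_pow (i j : B) (k : ℕ) :
    cs.simple j * (cs.simple i * cs.simple j) ^ k =
      ((cs.simple i * cs.simple j) ^ k)⁻¹ * cs.simple j := by
  have h : SemiconjBy (cs.simple j) (cs.simple i * cs.simple j) (cs.simple i * cs.simple j)⁻¹ := by
    simp [SemiconjBy, mul_assoc]
  rw [(h.pow_right k).eq, inv_pow]

open Classical in
lemma simpleAct_mul_pow (i j : B) (n : ℕ) (x : W) (e : ZMod 2) :
    ((simpleAct cs i * simpleAct cs j) ^ n) (x, e) =
      ((cs.simple i * cs.simple j) ^ n * x * ((cs.simple i * cs.simple j) ^ n)⁻¹,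
        e + ∑ k ∈ Finset.range (2 * n),
          if x = cs.simple j * (cs.simple i * cs.simple j) ^ k then 1 else 0) := by
  induction n with
  | zero => simp; rfl
  | succ n ih =>
    set r := cs.simple i * cs.simple j with hr
    have h1 : r ^ n * x * (r ^ n)⁻¹ = cs.simple j ↔ x = cs.simple j * r ^ (2 * n) := by
      rw [two_mul, pow_add, ← mul_assoc, simple_mul_pow, mul_inv_eq_iff_eq_mul,
        mul_assoc, ← hr, eq_inv_mul_iff_mul_eq]
    have h2 : cs.simple j * (r ^ n * x * (r ^ n)⁻¹) * cs.simple j = cs.simple i ↔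
        x = cs.simple j * r ^ (2 * n + 1) := by
      have e1 (y : W) : cs.simple j * y * cs.simple j = cs.simple i ↔ y = cs.simple j * r := by
        constructor
        · intro h
          simp [hr, ← h, mul_assoc]
        · intro h
          simp [h, hr, mul_assoc]
      have e2 : cs.simple j * r ^ (2 * n + 1) = (r ^ n)⁻¹ * (cs.simple j * r * r ^ n) := by
        rw [show 2 * n + 1 = n + (1 + n) by ring, pow_add, pow_add, pow_one, ← mul_assoc,
          simple_mul_pow]
        simp only [mul_assoc, hr]
      rw [e1, e2, mul_inv_eq_iff_eq_mul, eq_inv_mul_iff_mul_eq]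
    rw [pow_succ']
    change simpleAct cs i (simpleAct cs j (((simpleAct cs i * simpleAct cs j) ^ n) (x, e))) = _
    rw [ih]
    simp only [simpleAct, h1, h2, show 2 * (n + 1) = 2 * n + 1 + 1 by ring]
    rw [Finset.sum_range_succ, Finset.sum_range_succ, ← add_assoc, ← add_assoc]
    refine Prod.ext ?_ rfl
    change _ = r ^ (n + 1) * x * (r ^ (n + 1))⁻¹
    rw [pow_succ' r n, mul_inv_rev, hr, mul_inv_rev, cs.inv_simple, cs.inv_simple]
    simp only [mul_assoc]

lemma isLiftable_simpleAct : M.IsLiftable (simpleAct cs) := by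
  classical
  intro i j
  funext ⟨x, e⟩
  rw [simpleAct_mul_pow, cs.simple_mul_simple_pow, two_mul, Finset.sum_range_add]
  -- The reflections `s_j (s_i s_j)^k` repeat with period `M i j`, so each occurs an even
  -- number of times among `2 * M i j` consecutive ones.
  simp [pow_add, CharTwo.add_self_eq_zero]
  rfl

/-- The action of `W` on `W × ZMod 2` extending `simpleAct`. -/
noncomputable def act : W →* Function.End (W × ZMod 2) :=
  cs.lift ⟨simpleAct cs, isLiftable_simpleAct cs⟩

lemma act_simple (i : B) : act cs (cs.simple i) = simpleAct cs i :=
  cs.lift_apply_simple _ i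

lemma act_mul (u v : W) (p : W × ZMod 2) : act cs (u * v) p = act cs u (act cs v p) := by
  rw [map_mul]; rfl

open Classical in
lemma act_wordProd (ω : List B) (x : W) (e : ZMod 2) :
    act cs (cs.wordProd ω) (x, e) =
      (cs.wordProd ω * x * (cs.wordProd ω)⁻¹, e + ((cs.rightInvSeq ω).count x : ℕ)) := by
  induction ω with
  | nil => simp; rfl
  | cons i ω ih =>
    have h : cs.wordProd ω * x * (cs.wordProd ω)⁻¹ = cs.simple i ↔
        (cs.wordProd ω)⁻¹ * cs.simple i * cs.wordProd ω = x := by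
      constructor
      · intro h; rw [← h]; group
      · intro h; rw [← h]; group
    rw [cs.wordProd_cons, act_mul, ih, act_simple]
    simp only [simpleAct, h, CoxeterSystem.rightInvSeq, List.count_cons, beq_iff_eq]
    split_ifs <;> simp [mul_assoc, add_assoc]

/-- The parity of the number of occurrences of `x` in the right inversion sequence of any word
for `w`. -/
noncomputable def parity (w x : W) : ZMod 2 := (act cs w (x, 0)).2

lemma act_eq (w x : W) (e : ZMod 2) :
    act cs w (x, e) = (w * x * w⁻¹, e + parity cs w x) := by
  classical
  obtain ⟨ω, rfl⟩ := cs.wordProd_surjective w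
  simp [parity, act_wordProd]

lemma parity_mul (u v x : W) :
    parity cs (u * v) x = parity cs v x + parity cs u (v * x * v⁻¹) := by
  rw [parity, act_mul, act_eq, act_eq, zero_add]

open Classical in
lemma parity_simple (i : B) (x : W) :
    parity cs (cs.simple i) x = if x = cs.simple i then 1 else 0 := by
  simp [parity, act_simple, simpleAct]

lemma parity_self {t : W} (ht : cs.IsReflection t) : parity cs t t = 1 := by
  classical
  obtain ⟨v, i, rfl⟩ := ht
  have h1 : parity cs (v * v⁻¹) (v * cs.simple i * v⁻¹) = 0 := by
    simp [parity]; rfl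
  rw [parity_mul] at h1
  rw [parity_mul, parity_mul]
  simp only [inv_inv, mul_assoc, inv_mul_cancel_left, inv_mul_cancel, mul_one, one_mul,
    cs.simple_mul_simple_self, cs.inv_simple, parity_simple, if_true] at h1 ⊢
  rw [add_left_comm, h1, add_zero]

lemma length_lt_of_parity {w t : W} (h : parity cs w t ≠ 0) :
    cs.length (w * t) < cs.length w := by
  classical
  obtain ⟨ω, hω, rfl⟩ := cs.exists_isReduced w
  refine (cs.isRightInversion_of_mem_rightInvSeq hω ?_).2
  by_contra hm
  simp [parity, act_wordProd, List.count_eq_zero_of_not_mem hm] at h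

/-- The parity detects the right inversions of `w` (strong exchange). -/
lemma parity_eq_zero_iff {w t : W} (ht : cs.IsReflection t) :
    parity cs w t = 0 ↔ cs.length w < cs.length (w * t) := by
  constructor
  · intro h
    have h' : parity cs (w * t) t ≠ 0 := by
      rw [parity_mul, parity_self cs ht, mul_inv_cancel_right, h]
      decide
    simpa [mul_assoc, ht.mul_self] using length_lt_of_parity cs h'
  · intro h
    by_contra h'
    exact absurd (length_lt_of_parity cs h') h.not_gt

/-! ### Bruhat steps and the lifting property -/

/-- One step of a Bruhat chain: right multiplication by a reflection that increases the length. -/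
def Step (u v : W) : Prop :=
  ∃ t, cs.IsReflection t ∧ v = u * t ∧ cs.length u < cs.length v

lemma bruhatLE_of_chain {u v : W} (h : ReflTransGen (Step cs) u v) : BruhatLE cs u v := by
  induction h using ReflTransGen.head_induction_on with
  | refl => exact ⟨[], by simp, by simp, by simp⟩
  | head h _ ih =>
    obtain ⟨t, ht, rfl, hl⟩ := h
    obtain ⟨l, hr, rfl, hj⟩ := ih
    refine ⟨t :: l, by simpa using ⟨ht, hr⟩, by simp [mul_assoc], ?_⟩
    rintro (_ | j) hlt
    · simpa using hl
    · simpa [mul_assoc] using hj j (by simpa using hlt)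

/-- If `u < ut` for a reflection `t ≠ s`, then `us < uts`. -/
lemma length_lt_of_step {u t : W} (i : B) (ht : cs.IsReflection t) (hne : t ≠ cs.simple i)
    (h : cs.length u < cs.length (u * t)) :
    cs.length (u * cs.simple i) < cs.length (u * t * cs.simple i) := by
  classical
  have hr : cs.IsReflection (cs.simple i * t * cs.simple i) := by
    simpa using ht.conj (cs.simple i)
  have hne' : cs.simple i * t * cs.simple i ≠ cs.simple i := by
    intro h'
    apply hne
    have := congrArg (fun y => cs.simple i * y * cs.simple i) h'
    simpa [mul_assoc] using this
  have h0 : parity cs (u * cs.simple i) (cs.simple i * t * cs.simple i) = 0 := by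
    rw [parity_mul, parity_simple, if_neg hne', zero_add]
    simpa [mul_assoc] using (parity_eq_zero_iff cs ht).2 h
  simpa [mul_assoc] using (parity_eq_zero_iff cs hr).1 h0

/-- Lifting property: `u ≤ v` implies `us ≤ v` or `us ≤ vs`. -/
lemma chain_mul_simple {u v : W} (i : B) (h : ReflTransGen (Step cs) u v) :
    ReflTransGen (Step cs) (u * cs.simple i) v ∨
      ReflTransGen (Step cs) (u * cs.simple i) (v * cs.simple i) := by
  induction h using ReflTransGen.head_induction_on with
  | refl => exact Or.inr .refl
  | head h hc ih =>
    obtain ⟨t, ht, rfl, hl⟩ := h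
    by_cases hts : t = cs.simple i
    · subst hts
      exact Or.inl hc
    · refine ih.imp (.head ?_) (.head ?_) <;>
      exact ⟨cs.simple i * t * cs.simple i, by simpa using ht.conj (cs.simple i),
        by simp [mul_assoc], length_lt_of_step cs i ht hts hl⟩

lemma step_mul_simple {v : W} {i : B} (h : cs.length v < cs.length (v * cs.simple i)) :
    Step cs v (v * cs.simple i) :=
  ⟨_, cs.isReflection_simple i, rfl, h⟩

lemma step_of_descent {v : W} {i : B} (h : cs.length (v * cs.simple i) < cs.length v) :
    Step cs (v * cs.simple i) v :=
  ⟨_, cs.isReflection_simple i, by simp, h⟩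

lemma chain_lift_ascent {u v : W} {i : B} (h : ReflTransGen (Step cs) u v)
    (hv : cs.length v < cs.length (v * cs.simple i)) :
    ReflTransGen (Step cs) (u * cs.simple i) (v * cs.simple i) :=
  (chain_mul_simple cs i h).elim (fun h' => h'.tail (step_mul_simple cs hv)) id

lemma chain_lift_descent {u v : W} {i : B} (h : ReflTransGen (Step cs) u v)
    (hv : cs.length (v * cs.simple i) < cs.length v) :
    ReflTransGen (Step cs) (u * cs.simple i) v :=
  (chain_mul_simple cs i h).elim id (fun h' => h'.tail (step_of_descent cs hv))

lemma one_chain (n : ℕ) (w : W) (hn : cs.length w = n) : ReflTransGen (Step cs) 1 w := by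
  induction n using Nat.strong_induction_on generalizing w with
  | _ n ih =>
    by_cases hw : w = 1
    · rw [hw]
    · obtain ⟨i, hi⟩ := cs.exists_rightDescent_of_ne_one hw
      exact (ih _ (hn ▸ hi) _ rfl).tail (step_of_descent cs hi)

/-- The element `w * d` is the Demazure product of `w` and `b`, built one letter of `b` at a
time. -/
lemma exists_chain_sandwich (w : W) (n : ℕ) (b : W) (hn : cs.length b = n) :
    ∃ d, ReflTransGen (Step cs) d b ∧ ReflTransGen (Step cs) b (w * d) := by
  induction n using Nat.strong_induction_on generalizing b with
  | _ n ih =>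
    by_cases hb : b = 1
    · subst hb
      exact ⟨1, .refl, one_chain cs _ _ rfl⟩
    · obtain ⟨i, hi⟩ := cs.exists_rightDescent_of_ne_one hb
      obtain ⟨d, h1, h2⟩ := ih _ (hn ▸ hi) (b * cs.simple i) rfl
      have hdb : ReflTransGen (Step cs) d b := h1.tail (step_of_descent cs hi)
      rcases (cs.length_mul_simple_ne (w * d) i).lt_or_gt with hlt | hgt
      · exact ⟨d, hdb, by simpa using chain_lift_descent cs h2 hlt⟩
      · exact ⟨d * cs.simple i, chain_lift_descent cs hdb hi,
          by simpa [mul_assoc] using chain_lift_ascent cs h2 hgt⟩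

end BruhatSandwich

/-- for all `w, b` in a Coxeter group, there exist `c, d` with `d ≤ b` and
`b ≤ c` in the Bruhat order and `c = w * d`. -/
theorem exists_bruhat_sandwich {B W : Type*} [Group W] {M : CoxeterMatrix B}
    (cs : CoxeterSystem M W) (w b : W) :
    ∃ c d : W, BruhatLE cs d b ∧ BruhatLE cs b c ∧ c = w * d := by
  obtain ⟨d, h1, h2⟩ := BruhatSandwich.exists_chain_sandwich cs w _ b rfl
  exact ⟨w * d, d, BruhatSandwich.bruhatLE_of_chain cs h1,
    BruhatSandwich.bruhatLE_of_chain cs h2, rfl⟩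
end
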